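/- Let J be a real N × (m·n) matrix (indexed by Fin N and Fin m × Fin n), let F_t : Fin r → Matrix (Fin N) (Fin N) ℝ for t = 1,…,s be s families of filters, let G be a real N × r matrix, V a real m × r matrix and W a real n × r matrix. Then ∑_{t=1}^s ‖J − (F_t ∘ G)(V ⊙ W)ᵀ‖_F² = ‖b − K · vec(G)‖₂², where b ∈ ℝ^{s·m·n·N} is the s-fold vertical stack of vec(J), and K ∈ ℝ^{(s·m·n·N)×(r·N)} is the vertical stack of the blocks K_t = ((V ⊙ W) ⊗ I_N) · blkdiag(F_t). In particular the implicit-smoothness objective for updating G is a linear least-squares problem in vec(G). -/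

import Mathlib

open Kronecker

/- Column by column, filtering is multiplication by the block-diagonal matrix of the filters, and
`(A ⊗ I) vec(X) = vec(X Aᵀ)`. With `A = V ⊙ W`, each residual `J - (F ∘ G) Aᵀ` therefore vectorizes
to the corresponding block of `b - K vec(G)`, and vectorization preserves the sum of squares. -/

section FilteredFactorization

open Matrix

variable {τ ι κ κ' μ ν R : Type*}

/-- The column-filtering operation `F ∘ G`: the `i`-th filter acts on the `i`-th column of `G`. -/
def columnFilter [Fintype κ'] [NonUnitalNonAssocSemiring R]
    (F : ι → Matrix κ κ' R) (G : Matrix κ' ι R) : Matrix κ ι R :=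
  of fun k i => (F i *ᵥ G.col i) k

/-- The block-diagonal matrix `blkdiag(F)`. Unlike in `Matrix.blockDiagonal`, the block index comes
first in the pair, so that the columns are indexed like `Matrix.vec`. -/
def blkdiag [DecidableEq ι] [Zero R] (F : ι → Matrix κ κ' R) : Matrix (ι × κ) (ι × κ') R :=
  (blockDiagonal F).submatrix Prod.swap Prod.swap

/-- The vertical stack of a family of matrices with the same column index; the first component of
a row index is the block. -/
def rowStack (K : τ → Matrix μ ν R) : Matrix (τ × μ) ν R :=
  of fun p => K p.1 p.2

theorem blkdiag_mulVec_vec [DecidableEq ι] [Fintype ι] [Fintype κ']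
    [NonUnitalNonAssocSemiring R] (F : ι → Matrix κ κ' R) (G : Matrix κ' ι R) :
    blkdiag F *ᵥ vec G = vec (columnFilter F G) := by
  ext ⟨i, k⟩
  simp [blkdiag, columnFilter, mulVec, dotProduct, blockDiagonal_apply, Fintype.sum_prod_type_right]

theorem kronecker_one_mul_blkdiag_mulVec_vec [DecidableEq ι] [DecidableEq κ] [Fintype ι]
    [Fintype κ] [Fintype κ'] [CommSemiring R]
    (A : Matrix μ ι R) (F : ι → Matrix κ κ' R) (G : Matrix κ' ι R) :
    (A ⊗ₖ (1 : Matrix κ κ R) * blkdiag F) *ᵥ vec G = vec (columnFilter F G * Aᵀ) := by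
  rw [← mulVec_mulVec, blkdiag_mulVec_vec, kronecker_mulVec_vec, Matrix.one_mul]

theorem rowStack_mulVec [Fintype ν] [NonUnitalNonAssocSemiring R]
    (K : τ → Matrix μ ν R) (x : ν → R) (p : τ × μ) :
    (rowStack K *ᵥ x) p = (K p.1 *ᵥ x) p.2 :=
  rfl

theorem sum_comp_vec {S : Type*} [Fintype κ] [Fintype μ] [AddCommMonoid S]
    (f : R → S) (M : Matrix κ μ R) :
    ∑ p, f (vec M p) = ∑ k, ∑ l, f (M k l) :=
  Fintype.sum_prod_type_right fun p => f (vec M p)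

theorem implicit_smoothness_objective_linear_in_G_general [DecidableEq ι] [DecidableEq κ]
    [Fintype τ] [Fintype ι] [Fintype κ] [Fintype κ'] [Fintype μ] [CommRing R]
    (J : τ → Matrix κ μ R) (A : τ → Matrix μ ι R) (F : τ → ι → Matrix κ κ' R)
    (G : Matrix κ' ι R) :
    ∑ t, ∑ k, ∑ l, (J t k l - (columnFilter (F t) G * (A t)ᵀ) k l) ^ 2 =
      ∑ p : τ × (μ × κ), (vec (J p.1) p.2 -
        (rowStack (fun t => A t ⊗ₖ (1 : Matrix κ κ R) * blkdiag (F t)) *ᵥ vec G) p) ^ 2 := by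
  rw [Fintype.sum_prod_type]
  refine Finset.sum_congr rfl fun t _ => ?_
  simp only [rowStack_mulVec, kronecker_one_mul_blkdiag_mulVec_vec]
  exact (sum_comp_vec (· ^ 2) (J t - columnFilter (F t) G * (A t)ᵀ)).symm

end FilteredFactorization

/-- The implicit-smoothness objective for updating `G` is a linear
least-squares problem in `vec(G)`:
`∑ t, ‖J − (F_t ∘ G)(V ⊙ W)ᵀ‖_F² = ‖b − K vec(G)‖₂²` where `b` is the `s`-fold
stack of `vec(J)` and `K` stacks the blocks `((V ⊙ W) ⊗ I_N) blkdiag(F_t)`. -/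
theorem implicit_smoothness_objective_linear_in_G
    (s N m n r : ℕ) (J : Matrix (Fin N) (Fin m × Fin n) ℝ)
    (F : Fin s → Fin r → Matrix (Fin N) (Fin N) ℝ)
    (G : Matrix (Fin N) (Fin r) ℝ)
    (V : Matrix (Fin m) (Fin r) ℝ) (W : Matrix (Fin n) (Fin r) ℝ)
    (FG : Fin s → Matrix (Fin N) (Fin r) ℝ)
    (hFG : ∀ t k i, FG t k i = ∑ k', F t i k k' * G k' i)
    (krVW : Matrix (Fin m × Fin n) (Fin r) ℝ)
    (hkr : ∀ ℓo i, krVW ℓo i = V ℓo.1 i * W ℓo.2 i)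
    (blkdiagF : Fin s → Matrix (Fin r × Fin N) (Fin r × Fin N) ℝ)
    (hblk : ∀ t ik i'k', blkdiagF t ik i'k' =
      if ik.1 = i'k'.1 then F t ik.1 ik.2 i'k'.2 else 0)
    (vecG : Fin r × Fin N → ℝ) (hvecG : ∀ ik, vecG ik = G ik.2 ik.1)
    (b : Fin s × ((Fin m × Fin n) × Fin N) → ℝ)
    (hb : ∀ row, b row = J row.2.2 row.2.1)
    (K : Matrix (Fin s × ((Fin m × Fin n) × Fin N)) (Fin r × Fin N) ℝ)
    (hK : ∀ row col, K row col =
      ((krVW ⊗ₖ (1 : Matrix (Fin N) (Fin N) ℝ)) * blkdiagF row.1) row.2 col) :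
    (∑ t, ∑ k, ∑ ℓo, (J k ℓo - (FG t * krVW.transpose) k ℓo) ^ 2) =
      ∑ row, (b row - K.mulVec vecG row) ^ 2 := by
  obtain rfl : FG = fun t => columnFilter (F t) G :=
    funext fun t => Matrix.ext (hFG t)
  obtain rfl : blkdiagF = fun t => blkdiag (F t) :=
    funext fun t => Matrix.ext (hblk t)
  obtain rfl : K = rowStack fun t => krVW ⊗ₖ (1 : Matrix (Fin N) (Fin N) ℝ) * blkdiag (F t) :=
    Matrix.ext hK
  obtain rfl : vecG = G.vec := funext hvecG
  obtain rfl : b = fun p => J.vec p.2 := funext hb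
  exact implicit_smoothness_objective_linear_in_G_general (fun _ => J) (fun _ => krVW) F G
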